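/- arXiv:2201.00550 — 5 statements merged into one kernel-verified Lean document; each statement's English description precedes it below -/
import Mathlib

section
/- Let m and n be positive integers, let α₁,…,αₙ be m-th roots of unity in ℂ, and let p₁,…,p_r be the distinct prime divisors of m. If α₁ + ⋯ + αₙ = 0, then there exist natural numbers n₁,…,n_r such that n = n₁p₁ + ⋯ + n_r p_r. -/
/-- Numerical semigroup generated by the prime divisors of `m`. -/
def LLS (m : ℕ) : AddSubmonoid ℕ := AddSubmonoid.closure {p | p ∈ m.primeFactors}

lemma LLS_mono {a b : ℕ} (h : a ∣ b) (hb : b ≠ 0) : LLS a ≤ LLS b :=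
  AddSubmonoid.closure_mono fun _ hp => Nat.primeFactors_mono h hb hp

lemma LLS_exists {m n : ℕ} (h : n ∈ LLS m) : ∃ c : ℕ → ℕ, n = ∑ p ∈ m.primeFactors, c p * p := by
  unfold LLS at h
  induction h using AddSubmonoid.closure_induction with
  | mem x hx =>
    refine ⟨fun q => if q = x then 1 else 0, ?_⟩
    have hx' : x ∈ m.primeFactors := hx
    simp only [ite_mul, one_mul, zero_mul, Finset.sum_ite_eq', hx', if_true]
  | zero => exact ⟨fun _ => 0, by simp⟩
  | add x y _ _ hx hy =>
    obtain ⟨c, hc⟩ := hx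
    obtain ⟨d, hd⟩ := hy
    exact ⟨fun p => c p + d p, by simp only [add_mul, Finset.sum_add_distrib]; omega⟩

lemma decomp (m' p : ℕ) (hp : p.Prime) (ξ : ℂ) (h : IsPrimitiveRoot (ξ ^ m') p) (x : ℂ)
    (hx : x ^ (m' * p) = 1) : ∃ i < p, ∃ β : ℂ, β ^ m' = 1 ∧ x = ξ ^ i * β := by
  have : NeZero p := ⟨hp.ne_zero⟩
  obtain ⟨i, hi, hi'⟩ := h.eq_pow_of_pow_eq_one (ξ := x ^ m') (by rw [← pow_mul]; exact hx)
  have hne : ξ ^ m' ≠ 0 := h.ne_zero hp.ne_zero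
  by_cases hm : m' = 0
  · subst hm
    have := h.eq_orderOf
    simp at this
    exact absurd this hp.ne_one
  have hξ : ξ ≠ 0 := fun h0 => hne (by rw [h0, zero_pow hm])
  refine ⟨i, hi, x / ξ ^ i, ?_, by field_simp⟩
  rw [div_pow, ← hi', ← pow_mul, ← pow_mul, mul_comm, div_self (pow_ne_zero _ hξ)]

lemma decomp_multiset (m' p : ℕ) (hp : p.Prime) (ξ : ℂ) (h : IsPrimitiveRoot (ξ ^ m') p)
    (v : Multiset ℂ) (hv : ∀ x ∈ v, x ^ (m' * p) = 1) :
    ∃ w : ℕ → Multiset ℂ, (∀ i, ∀ x ∈ w i, x ^ m' = 1) ∧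
      v.card = ∑ i ∈ Finset.range p, (w i).card ∧
      v.sum = ∑ i ∈ Finset.range p, ξ ^ i * (w i).sum := by
  induction v using Multiset.induction with
  | empty => exact ⟨fun _ => 0, by simp⟩
  | cons a s ih =>
    obtain ⟨w, h1, h2, h3⟩ := ih fun x hx => hv x (Multiset.mem_cons_of_mem hx)
    obtain ⟨i, hi, β, hβ, rfl⟩ := decomp m' p hp ξ h a (hv a (Multiset.mem_cons_self a s))
    refine ⟨fun j => if j = i then β ::ₘ w j else w j, ?_, ?_, ?_⟩
    · intro j x hx
      dsimp only at hx
      split_ifs at hx with hj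
      · rcases Multiset.mem_cons.1 hx with rfl | hx
        · exact hβ
        · exact h1 j x hx
      · exact h1 j x hx
    · have : ∀ j, (if j = i then β ::ₘ w j else w j).card = (w j).card + if j = i then 1 else 0 := by
        intro j; split_ifs <;> simp
      simp only [this, Finset.sum_add_distrib, Multiset.card_cons, h2]
      simp [hi]
    · have : ∀ j, ξ ^ j * (if j = i then β ::ₘ w j else w j).sum
          = ξ ^ j * (w j).sum + if j = i then ξ ^ j * β else 0 := by
        intro j; split_ifs <;> simp; ring
      simp only [this, Finset.sum_add_distrib, Multiset.sum_cons, h3]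
      simp [hi, add_comm]

open IntermediateField in
lemma indep (m' p D : ℕ) (hm : 0 < m') (hp : p.Prime) (ξ : ℂ) (h : IsPrimitiveRoot (ξ ^ m') p)
    (hξ : ξ ^ (m' * p) = 1)
    (hD : D * m'.totient ≤ (m' * p).totient) (ζ : ℂ) (hζ : IsPrimitiveRoot ζ m')
    (a : ℕ → ℂ) (ha : ∀ i, a i ∈ ℚ⟮ζ⟯) (hs : ∑ i ∈ Finset.range D, ξ ^ i * a i = 0) :
    ∀ i < D, a i = 0 := by
  have hmp : 0 < m' * p := Nat.mul_pos hm hp.pos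
  have : NeZero m' := ⟨hm.ne'⟩
  have key : ∀ (k : ℕ), 0 < k → ∀ z : ℂ, IsPrimitiveRoot z k → Module.finrank ℚ ℚ⟮z⟯ = k.totient := by
    intro k hk z hz
    rw [adjoin.finrank ((hz.isIntegral hk).tower_top), ← Polynomial.cyclotomic_eq_minpoly_rat hz hk,
      Polynomial.natDegree_cyclotomic]
  have hint : IsIntegral ℚ⟮ζ⟯ ξ := IsIntegral.of_pow hmp (by rw [hξ]; exact isIntegral_one)
  have hdeg : D ≤ (minpoly ℚ⟮ζ⟯ ξ).natDegree := by
    have hη := Complex.isPrimitiveRoot_exp (m' * p) hmp.ne'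
    set η := Complex.exp (2 * Real.pi * Complex.I / ((m' * p : ℕ) : ℂ))
    obtain ⟨i, hi, β, hβ, hηi⟩ := decomp m' p hp ξ h η hη.pow_eq_one
    obtain ⟨t, ht, htβ⟩ := hζ.eq_pow_of_pow_eq_one hβ
    have hmem : η ∈ (ℚ⟮ζ⟯⟮ξ⟯).restrictScalars ℚ := by
      rw [mem_restrictScalars, hηi, ← htβ]
      refine mul_mem (pow_mem (mem_adjoin_simple_self _ ξ) _) (pow_mem ?_ _)
      exact IntermediateField.algebraMap_mem (ℚ⟮ζ⟯⟮ξ⟯) (AdjoinSimple.gen ℚ ζ)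
    have hle : ℚ⟮η⟯ ≤ (ℚ⟮ζ⟯⟮ξ⟯).restrictScalars ℚ := by
      rw [adjoin_simple_le_iff]; exact hmem
    have : FiniteDimensional ℚ ℚ⟮ζ⟯ := adjoin.finiteDimensional ((hζ.isIntegral hm).tower_top)
    have : FiniteDimensional ℚ⟮ζ⟯ ℚ⟮ζ⟯⟮ξ⟯ := adjoin.finiteDimensional hint
    have : FiniteDimensional ℚ ℚ⟮ζ⟯⟮ξ⟯ := FiniteDimensional.trans ℚ ℚ⟮ζ⟯ _
    have : FiniteDimensional ℚ ((ℚ⟮ζ⟯⟮ξ⟯).restrictScalars ℚ) := this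
    have h1 : (m' * p).totient ≤ Module.finrank ℚ ℚ⟮ζ⟯⟮ξ⟯ := by
      rw [← key _ hmp η hη]
      exact LinearMap.finrank_le_finrank_of_injective (f := (inclusion hle).toLinearMap)
        (inclusion_injective hle)
    rw [← Module.finrank_mul_finrank ℚ ℚ⟮ζ⟯ ℚ⟮ζ⟯⟮ξ⟯, key m' hm ζ hζ, adjoin.finrank hint] at h1
    have h2 := hD.trans h1
    rw [mul_comm] at h2
    exact Nat.le_of_mul_le_mul_left h2 (Nat.totient_pos.2 hm)
  have hli := (linearIndependent_pow (K := ℚ⟮ζ⟯) ξ).comp (Fin.castLE hdeg) (Fin.castLE_injective hdeg)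
  rw [Fintype.linearIndependent_iff] at hli
  intro i hi
  have := hli (fun i => ⟨a i, ha i⟩) (by
    rw [← hs, ← Fin.sum_univ_eq_sum_range (fun i => ξ ^ i * a i)]
    refine Finset.sum_congr rfl fun i _ => ?_
    simp [Algebra.smul_def, mul_comm]) ⟨i, hi⟩
  simpa using congrArg Subtype.val this

open IntermediateField in
lemma sum_mem_adj (m' : ℕ) (hm : 0 < m') (ζ : ℂ) (hζ : IsPrimitiveRoot ζ m') (w : Multiset ℂ)
    (hw : ∀ x ∈ w, x ^ m' = 1) : w.sum ∈ ℚ⟮ζ⟯ := by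
  have : NeZero m' := ⟨hm.ne'⟩
  refine multiset_sum_mem w fun x hx => ?_
  obtain ⟨t, ht, rfl⟩ := hζ.eq_pow_of_pow_eq_one (hw x hx)
  exact pow_mem (mem_adjoin_simple_self _ ζ) _

/-- ramified step -/
lemma splitA (m' p : ℕ) (hm : 0 < m') (hp : p.Prime) (hd : p ∣ m') (u v : Multiset ℂ)
    (hu : ∀ x ∈ u, x ^ (m' * p) = 1) (hv : ∀ x ∈ v, x ^ (m' * p) = 1) (hs : u.sum = v.sum) :
    ∃ a b : ℕ → Multiset ℂ, (∀ i, ∀ x ∈ a i, x ^ m' = 1) ∧ (∀ i, ∀ x ∈ b i, x ^ m' = 1) ∧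
      u.card = ∑ i ∈ Finset.range p, (a i).card ∧ v.card = ∑ i ∈ Finset.range p, (b i).card ∧
      ∀ i < p, (a i).sum = (b i).sum := by
  have hmp : 0 < m' * p := Nat.mul_pos hm hp.pos
  have hξ := Complex.isPrimitiveRoot_exp (m' * p) hmp.ne'
  set ξ := Complex.exp (2 * Real.pi * Complex.I / ((m' * p : ℕ) : ℂ))
  have hζ := Complex.isPrimitiveRoot_exp m' hm.ne'
  have h : IsPrimitiveRoot (ξ ^ m') p := hξ.pow hmp rfl
  obtain ⟨a, ha1, ha2, ha3⟩ := decomp_multiset m' p hp ξ h u hu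
  obtain ⟨b, hb1, hb2, hb3⟩ := decomp_multiset m' p hp ξ h v hv
  refine ⟨a, b, ha1, hb1, ha2, hb2, fun i hi => ?_⟩
  refine sub_eq_zero.1 (indep m' p p hm hp ξ h hξ.pow_eq_one ?_ _ hζ
    (fun i => (a i).sum - (b i).sum) (fun i => sub_mem (sum_mem_adj m' hm _ hζ _ (ha1 i))
      (sum_mem_adj m' hm _ hζ _ (hb1 i))) ?_ i hi)
  · rw [mul_comm m' p, Nat.totient_mul_of_prime_of_dvd hp hd]
  · simp only [mul_sub, Finset.sum_sub_distrib]
    rw [← ha3, ← hb3, hs, sub_self]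

/-- unramified step -/
lemma splitB (m' p : ℕ) (hm : 0 < m') (hp : p.Prime) (hd : ¬ p ∣ m') (u v : Multiset ℂ)
    (hu : ∀ x ∈ u, x ^ (m' * p) = 1) (hv : ∀ x ∈ v, x ^ (m' * p) = 1) (hs : u.sum = v.sum) :
    ∃ a b : ℕ → Multiset ℂ, (∀ i, ∀ x ∈ a i, x ^ m' = 1) ∧ (∀ i, ∀ x ∈ b i, x ^ m' = 1) ∧
      u.card = ∑ i ∈ Finset.range p, (a i).card ∧ v.card = ∑ i ∈ Finset.range p, (b i).card ∧
      ∀ i < p, ∀ j < p, (b i).sum - (a i).sum = (b j).sum - (a j).sum := by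
  have hξ := Complex.isPrimitiveRoot_exp p hp.ne_zero
  set ξ := Complex.exp (2 * Real.pi * Complex.I / (p : ℂ))
  have hζ := Complex.isPrimitiveRoot_exp m' hm.ne'
  have h : IsPrimitiveRoot (ξ ^ m') p :=
    hξ.pow_of_coprime m' (((Nat.Prime.coprime_iff_not_dvd hp).2 hd).symm)
  obtain ⟨a, ha1, ha2, ha3⟩ := decomp_multiset m' p hp ξ h u hu
  obtain ⟨b, hb1, hb2, hb3⟩ := decomp_multiset m' p hp ξ h v hv
  refine ⟨a, b, ha1, hb1, ha2, hb2, ?_⟩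
  obtain ⟨q, rfl⟩ : ∃ q, p = q + 1 := ⟨p - 1, by have := hp.pos; omega⟩
  have hmem : ∀ i, (b i).sum - (a i).sum ∈ IntermediateField.adjoin ℚ {_} := fun i =>
    sub_mem (sum_mem_adj m' hm _ hζ _ (hb1 i)) (sum_mem_adj m' hm _ hζ _ (ha1 i))
  have hgeom := hξ.geom_sum_eq_zero hp.one_lt
  have hz : ∑ i ∈ Finset.range (q + 1), ξ ^ i * ((b i).sum - (a i).sum) = 0 := by
    simp only [mul_sub, Finset.sum_sub_distrib]
    rw [← ha3, ← hb3, hs, sub_self]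
  have main := indep m' (q + 1) q hm hp ξ h (by rw [mul_comm, pow_mul, hξ.pow_eq_one, one_pow]) ?_ _
    hζ (fun i => ((b i).sum - (a i).sum) - ((b q).sum - (a q).sum))
    (fun i => sub_mem (hmem i) (hmem q)) ?_
  · have : ∀ i < q + 1, (b i).sum - (a i).sum = (b q).sum - (a q).sum := by
      intro i hi
      rcases Nat.lt_succ_iff_lt_or_eq.1 hi with hi | rfl
      · exact sub_eq_zero.1 (main i hi)
      · rfl
    intro i hi j hj
    rw [this i hi, this j hj]
  · rw [mul_comm m', Nat.totient_mul_of_prime_of_not_dvd hp hd]; simp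
  · rw [Finset.sum_range_succ] at hz hgeom
    have : ∑ i ∈ Finset.range q, ξ ^ i * (((b i).sum - (a i).sum) - ((b q).sum - (a q).sum))
      = ∑ i ∈ Finset.range q, ξ ^ i * ((b i).sum - (a i).sum)
        - (∑ i ∈ Finset.range q, ξ ^ i) * ((b q).sum - (a q).sum) := by
      rw [Finset.sum_mul, ← Finset.sum_sub_distrib]
      exact Finset.sum_congr rfl fun i _ => by ring
    rw [this]
    linear_combination hz - ((b q).sum - (a q).sum) * hgeom

/-- The dichotomy: `u ~ v` differ by an element of the semigroup, or `v` is large. -/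
def LLC (P Q m U V : ℕ) : Prop :=
  (∃ s ∈ LLS m, V = U + s) ∨ P * Q + U ≤ V + Q * U + Q

lemma one_case (u v : Multiset ℂ) (hu : ∀ x ∈ u, x ^ 1 = 1) (hv : ∀ x ∈ v, x ^ 1 = 1)
    (hs : u.sum = v.sum) : v.card = u.card := by
  have h : ∀ w : Multiset ℂ, (∀ x ∈ w, x ^ 1 = 1) → w.sum = w.card := by
    intro w hw
    rw [Multiset.eq_replicate_card.2 (fun x hx => (pow_one x).symm.trans (hw x hx))]
    simp
  rw [h u hu, h v hv] at hs
  exact_mod_cast hs.symm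

lemma stepA (P Q p : ℕ) (hQ : 1 ≤ Q) (S : AddSubmonoid ℕ) (a b : ℕ → ℕ)
    (h : ∀ i < p, (∃ s ∈ S, b i = a i + s) ∨ P * Q + a i ≤ b i + Q * a i + Q) :
    (∃ s ∈ S, ∑ i ∈ Finset.range p, b i = ∑ i ∈ Finset.range p, a i + s) ∨
      P * Q + ∑ i ∈ Finset.range p, a i
        ≤ ∑ i ∈ Finset.range p, b i + Q * ∑ i ∈ Finset.range p, a i + Q := by
  by_cases hall : ∀ i < p, ∃ s ∈ S, b i = a i + s
  · left
    choose! s hs hs' using hall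
    refine ⟨∑ i ∈ Finset.range p, s i, sum_mem fun i hi => hs i (Finset.mem_range.1 hi), ?_⟩
    rw [← Finset.sum_add_distrib]
    exact Finset.sum_congr rfl fun i hi => hs' i (Finset.mem_range.1 hi)
  · right
    push Not at hall
    obtain ⟨i, hi, hi'⟩ := hall
    have h2 := (h i hi).resolve_left (by rintro ⟨s, hs, e⟩; exact hi' s hs e)
    have ha := Finset.single_le_sum (f := a) (fun _ _ => Nat.zero_le _) (Finset.mem_range.2 hi)
    have hb := Finset.single_le_sum (f := b) (fun _ _ => Nat.zero_le _) (Finset.mem_range.2 hi)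
    nlinarith [Nat.mul_le_mul_left (Q - 1) ha, Nat.sub_add_cancel hQ]

lemma stepB (P Q p : ℕ) (hP : 1 ≤ P) (hPQ : P ≤ Q) (S : AddSubmonoid ℕ) (hpS : p ∈ S)
    (a b : ℕ → ℕ) (k : ℕ)
    (hj : ∑ i ∈ Finset.range p, a i < P)
    (hk : ∀ i < p, a i = 0 → k ≤ b i)
    (h : ∀ i < p, (∃ s ∈ S, b i = (a i + k) + s) ∨
      (Q ≤ p ∧ P * Q + (a i + k) ≤ b i + Q * (a i + k) + Q)) :
    (∃ s ∈ S, ∑ i ∈ Finset.range p, b i = ∑ i ∈ Finset.range p, a i + s) ∨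
      P * Q + ∑ i ∈ Finset.range p, a i
        ≤ ∑ i ∈ Finset.range p, b i + Q * ∑ i ∈ Finset.range p, a i + Q := by
  by_cases hall : ∀ i < p, ∃ s ∈ S, b i = (a i + k) + s
  · left
    choose! s hs hs' using hall
    refine ⟨k • p + ∑ i ∈ Finset.range p, s i,
      add_mem (nsmul_mem hpS k) (sum_mem fun i hi => hs i (Finset.mem_range.1 hi)), ?_⟩
    rw [Finset.sum_congr rfl fun i hi => hs' i (Finset.mem_range.1 hi)]
    simp only [Finset.sum_add_distrib, Finset.sum_const, Finset.card_range, smul_eq_mul]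
    ring
  · right
    push Not at hall
    obtain ⟨i, hi, hi'⟩ := hall
    obtain ⟨hQp, h2⟩ := (h i hi).resolve_left (by rintro ⟨s, hs, e⟩; exact hi' s hs e)
    have hterm : ∀ t ∈ Finset.range p, k ≤ b t + k * a t := by
      intro t ht
      rcases Nat.eq_zero_or_pos (a t) with h0 | h0
      · have := hk t (Finset.mem_range.1 ht) h0; omega
      · nlinarith
    have hmem := Finset.mem_range.2 hi
    have ea := Finset.add_sum_erase (Finset.range p) a hmem
    have eb := Finset.add_sum_erase (Finset.range p) b hmem
    have hsum := Finset.sum_le_sum (fun t (ht : t ∈ (Finset.range p).erase i) =>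
      hterm t (Finset.mem_of_mem_erase ht))
    rw [Finset.sum_add_distrib, ← Finset.mul_sum, Finset.sum_const, Finset.card_erase_of_mem hmem,
      Finset.card_range, smul_eq_mul] at hsum
    have hfull := Finset.sum_le_sum hterm
    rw [Finset.sum_add_distrib, ← Finset.mul_sum, Finset.sum_const, Finset.card_range,
      smul_eq_mul] at hfull
    generalize ∑ t ∈ (Finset.range p).erase i, a t = l at *
    generalize ∑ t ∈ (Finset.range p).erase i, b t = B at *
    generalize ∑ t ∈ Finset.range p, a t = j at *
    generalize ∑ t ∈ Finset.range p, b t = V at *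
    generalize a i = A at *
    generalize b i = B' at *
    obtain ⟨r, rfl⟩ : ∃ r, p = r + 1 := ⟨p - 1, by omega⟩
    simp only [Nat.add_sub_cancel] at hsum
    zify at *
    rcases lt_or_ge k Q with hkQ | hkQ
    · zify at hkQ
      rw [← ea, ← eb]
      nlinarith [mul_nonneg (Int.natCast_nonneg l) (by linarith : (0 : ℤ) ≤ Q - 1 - k),
        mul_nonneg (Int.natCast_nonneg k) (by linarith : (0 : ℤ) ≤ r + 1 - Q)]
    · zify at hkQ
      nlinarith [mul_nonneg (by linarith : (0 : ℤ) ≤ k - Q) (by linarith : (0 : ℤ) ≤ r + 1 - j),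
        mul_nonneg (by linarith : (0 : ℤ) ≤ Q) (by linarith : (0 : ℤ) ≤ r + 1 - P)]

lemma claim (P Q : ℕ) (hP : 1 ≤ P) (hPQ : P ≤ Q) (m : ℕ) : 0 < m →
    (∀ p : ℕ, p.Prime → p ∣ m → p = P ∨ Q ≤ p) → ∀ u v : Multiset ℂ,
    (∀ x ∈ u, x ^ m = 1) → (∀ x ∈ v, x ^ m = 1) → u.sum = v.sum → LLC P Q m u.card v.card := by
  induction m using Nat.strong_induction_on with
  | _ m ih =>
  intro hm hpr u v hu hv hs
  by_cases hm1 : m = 1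
  · subst hm1
    exact Or.inl ⟨0, zero_mem _, by rw [one_case u v hu hv hs, add_zero]⟩
  obtain ⟨p, hp, hpm, hor⟩ : ∃ p : ℕ, p.Prime ∧ p ∣ m ∧
      (Q ≤ p ∨ ∀ q : ℕ, q.Prime → q ∣ m → q = p) := by
    by_cases hex : ∃ p : ℕ, p.Prime ∧ p ∣ m ∧ p ≠ P
    · obtain ⟨p, hp, hpm, hne⟩ := hex
      exact ⟨p, hp, hpm, Or.inl ((hpr p hp hpm).resolve_left hne)⟩
    · push Not at hex
      have h1 := Nat.minFac_prime hm1
      refine ⟨m.minFac, h1, Nat.minFac_dvd m, Or.inr fun q hq hqm => ?_⟩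
      rw [hex q hq hqm, hex _ h1 (Nat.minFac_dvd m)]
  obtain ⟨m', rfl⟩ : ∃ m', m = m' * p := by
    obtain ⟨c, hc⟩ := hpm
    exact ⟨c, by rw [hc, mul_comm]⟩
  have hm' : 0 < m' := Nat.pos_of_mul_pos_right hm
  have hlt : m' < m' * p := lt_mul_of_one_lt_right hm' hp.one_lt
  have hdvd : m' ∣ m' * p := Dvd.intro _ rfl
  have hSS := LLS_mono hdvd hm.ne'
  have IH := ih m' hlt hm' fun q hq hqm => hpr q hq (hqm.trans hdvd)
  by_cases hd : p ∣ m'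
  · obtain ⟨a, b, ha, hb, hca, hcb, hab⟩ := splitA m' p hm' hp hd u v hu hv hs
    unfold LLC
    rw [hca, hcb]
    refine stepA P Q p (hP.trans hPQ) _ (fun i => (a i).card) (fun i => (b i).card) fun i hi => ?_
    rcases IH (a i) (b i) (ha i) (hb i) (hab i hi) with ⟨s, h1, h2⟩ | h
    · exact Or.inl ⟨s, hSS h1, h2⟩
    · exact Or.inr h
  · obtain ⟨a, b, ha, hb, hca, hcb, hab⟩ := splitB m' p hm' hp hd u v hu hv hs
    by_cases hj : P ≤ u.card
    · right
      nlinarith [Nat.mul_le_mul_left (Q - 1) hj, Nat.sub_add_cancel (hP.trans hPQ)]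
    push Not at hj
    unfold LLC
    have hmm : Q ≤ p ∨ m' = 1 := by
      refine hor.imp_right fun h => ?_
      by_contra hne
      have := h _ (Nat.minFac_prime hne) ((Nat.minFac_dvd m').trans hdvd)
      exact hd (this ▸ Nat.minFac_dvd m')
    have hpS : p ∈ LLS (m' * p) :=
      AddSubmonoid.subset_closure (Nat.mem_primeFactors.2 ⟨hp, Dvd.intro_left _ rfl, hm.ne'⟩)
    have hPp : P ≤ p := by
      rcases hpr p hp (Dvd.intro_left _ rfl) with h | h <;> omega
    obtain ⟨i₀, hi₀, h0⟩ : ∃ i < p, (a i).card = 0 := by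
      by_contra! hne
      have : ∑ i ∈ Finset.range p, 1 ≤ ∑ i ∈ Finset.range p, (a i).card :=
        Finset.sum_le_sum fun i hi => Nat.pos_of_ne_zero (hne i (Finset.mem_range.1 hi))
      simp at this
      omega
    obtain ⟨i₁, hi₁, hmin⟩ := Finset.exists_min_image
      ((Finset.range p).filter fun i => (a i).card = 0) (fun i => (b i).card)
      ⟨i₀, by simp [hi₀, Multiset.card_eq_zero.1 h0]⟩
    simp only [Finset.mem_filter, Finset.mem_range] at hi₁ hmin
    rw [hca, hcb]
    refine stepB P Q p hP hPQ _ hpS (fun i => (a i).card) (fun i => (b i).card) (b i₁).card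
      (hca ▸ hj) (fun i hi hi0 => hmin i ⟨hi, hi0⟩) fun i hi => ?_
    have hroot : ∀ x ∈ a i + b i₁, x ^ m' = 1 := by
      intro x hx
      rcases Multiset.mem_add.1 hx with hx | hx
      · exact ha _ _ hx
      · exact hb _ _ hx
    have hsum : (a i + b i₁).sum = (b i).sum := by
      have := hab i hi i₁ hi₁.1
      rw [Multiset.card_eq_zero.1 hi₁.2, Multiset.sum_zero] at this
      rw [Multiset.sum_add]
      linear_combination -this
    rcases hmm with hmm | hmm
    · have := IH (a i + b i₁) (b i) hroot (hb i) hsum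
      rw [Multiset.card_add] at this
      rcases this with ⟨s, h1, h2⟩ | h
      · exact Or.inl ⟨s, hSS h1, h2⟩
      · exact Or.inr ⟨hmm, h⟩
    · subst hmm
      have := one_case _ _ hroot (hb i) hsum
      rw [Multiset.card_add] at this
      exact Or.inl ⟨0, zero_mem _, by simpa using this⟩

theorem roots_of_unity_sum_zero (m n : ℕ) (hm : 0 < m) (hn : 0 < n)
    (α : Fin n → ℂ) (hα : ∀ i, α i ^ m = 1) (hsum : ∑ i, α i = 0) :
    ∃ c : ℕ → ℕ, n = ∑ p ∈ m.primeFactors, c p * p := by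
  apply LLS_exists
  have hv : ∀ x ∈ (Finset.univ.val.map α), x ^ m = 1 := by
    intro x hx
    obtain ⟨i, _, rfl⟩ := Multiset.mem_map.1 hx
    exact hα i
  have main : ∀ P Q, 1 ≤ P → P ≤ Q → (∀ p : ℕ, p.Prime → p ∣ m → p = P ∨ Q ≤ p) →
      n ∈ LLS m ∨ P * Q ≤ n + Q := by
    intro P Q hP hPQ h
    have := claim P Q hP hPQ m hm h 0 (Finset.univ.val.map α) (by simp) hv
      (by rw [Multiset.sum_zero]; exact hsum.symm)
    simpa [LLC] using this
  by_cases hm1 : m = 1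
  · subst hm1
    refine (main 2 (n + 2) (by omega) (by omega) fun p hp hp1 => ?_).resolve_right (by omega)
    exact absurd (Nat.dvd_one.1 hp1) hp.ne_one
  have hP := Nat.minFac_prime hm1
  by_cases hex : ∃ q : ℕ, q.Prime ∧ q ∣ m ∧ q ≠ m.minFac
  · classical
    obtain ⟨hq, hqm, hne⟩ := Nat.find_spec hex
    have hmin : ∀ r, r.Prime ∧ r ∣ m ∧ r ≠ m.minFac → Nat.find hex ≤ r := fun r hr =>
      Nat.find_min' hex hr
    set Q := Nat.find hex
    rcases main m.minFac Q hP.one_le (Nat.minFac_le_of_dvd hq.two_le hqm) (fun p hp hpm => by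
      by_cases h : p = m.minFac
      · exact Or.inl h
      · exact Or.inr (hmin p ⟨hp, hpm, h⟩)) with h | h
    · exact h
    · have hF := (frobeniusNumber_iff.1 (frobeniusNumber_pair
        ((Nat.coprime_primes hP hq).2 hne.symm) hP.one_lt hq.one_lt)).2 n (by
          have := hP.two_le
          have := Nat.mul_le_mul hP.two_le hq.two_le
          omega)
      refine AddSubmonoid.closure_mono ?_ hF
      rintro x (rfl | rfl)
      · exact Nat.mem_primeFactors.2 ⟨hP, Nat.minFac_dvd m, hm.ne'⟩
      · exact Nat.mem_primeFactors.2 ⟨hq, hqm, hm.ne'⟩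
  · push Not at hex
    refine (main m.minFac (n + m.minFac) hP.one_le (by omega)
      fun p hp hpm => Or.inl (hex p hp hpm)).resolve_right ?_
    have := hP.two_le
    nlinarith
end

section
/- Let G be a finite group with normal subgroups A and B such that A ∩ B = 1, and let a ∈ A. Then a is a vanishing element of G if and only if the coset aB is a vanishing element of the quotient group G/B. -/
def IsVanishing {G : Type} [Group G] (g : G) : Prop :=
  ∃ V : FDRep ℂ G, CategoryTheory.Simple V ∧ V.character g = 0

open CategoryTheory in
/-- An irreducible representation gives a simple object of `FDRep`. -/
theorem simple_of_isIrreducible {G V : Type} [Group G] [Fintype G] [AddCommGroup V] [Module ℂ V]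
    [FiniteDimensional ℂ V] (ρ : Representation ℂ G V) [ρ.IsIrreducible] :
    Simple (FDRep.of ρ) := by
  classical
  have := invertibleOfNonzero (NeZero.ne (Nat.card G : ℂ))
  rw [FDRep.simple_iff_char_is_norm_one]
  have h := Representation.char_orthonormal ρ ρ
  rw [if_pos ⟨Representation.Equiv.refl ρ⟩, inv_mul_eq_one₀ (NeZero.ne _)] at h
  exact h.symm

/-- The sum of all conjugates `x g x⁻¹` (a positive multiple of the class sum) in `ℂ[G]`. -/
noncomputable def conjSum {G : Type} [Group G] [Fintype G] (g : G) : MonoidAlgebra ℂ G :=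
  ∑ x : G, MonoidAlgebra.of ℂ G (x * g * x⁻¹)

theorem of_mul_conjSum {G : Type} [Group G] [Fintype G] (g h : G) :
    MonoidAlgebra.of ℂ G h * conjSum g = conjSum g * MonoidAlgebra.of ℂ G h := by
  unfold conjSum
  rw [Finset.mul_sum, Finset.sum_mul]
  refine Fintype.sum_equiv (Equiv.mulLeft h) _ _ fun x => ?_
  rw [← map_mul, ← map_mul]
  congr 1
  simp [mul_assoc]

theorem mul_conjSum {G : Type} [Group G] [Fintype G] (g : G) (r : MonoidAlgebra ℂ G) :
    r * conjSum g = conjSum g * r := by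
  induction r using MonoidAlgebra.induction_on with
  | of h => exact of_mul_conjSum g h
  | add a b ha hb => rw [add_mul, mul_add, ha, hb]
  | smul c a ha => rw [smul_mul_assoc, mul_smul_comm, ha]

theorem asAlgebraHom_conjSum {G V : Type} [Group G] [Fintype G] [AddCommGroup V] [Module ℂ V]
    (ρ : Representation ℂ G V) (g : G) :
    ρ.asAlgebraHom (conjSum g) = ∑ x : G, ρ (x * g * x⁻¹) := by
  unfold conjSum
  rw [map_sum]
  exact Finset.sum_congr rfl fun x _ => ρ.asAlgebraHom_of _

theorem trace_conjSum {G V : Type} [Group G] [Fintype G] [AddCommGroup V] [Module ℂ V]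
    (ρ : Representation ℂ G V) (g : G) :
    LinearMap.trace ℂ V (ρ.asAlgebraHom (conjSum g)) = Fintype.card G * ρ.character g := by
  rw [asAlgebraHom_conjSum, map_sum]
  rw [Finset.sum_congr rfl (fun x _ => show LinearMap.trace ℂ V (ρ (x * g * x⁻¹)) = ρ.character g
    from ρ.char_conj g x)]
  simp

open CategoryTheory in
theorem not_isUnit_of_isVanishing {G : Type} [Group G] [Fintype G] {g : G} (h : IsVanishing g) :
    ¬ IsUnit (conjSum g) := by
  obtain ⟨V, hV, hg⟩ := h
  intro hu
  let ρ : Representation ℂ G V := V.ρ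
  have ht : LinearMap.trace ℂ V (ρ.asAlgebraHom (conjSum g)) = 0 := by
    rw [trace_conjSum]
    exact mul_eq_zero_of_right _ hg
  let f : V ⟶ V := ⟨InducedCategory.homMk (ModuleCat.ofHom (ρ.asAlgebraHom (conjSum g))), fun h => by
    ext1
    change ρ.asAlgebraHom (conjSum g) ∘ₗ ρ h = ρ h ∘ₗ ρ.asAlgebraHom (conjSum g)
    have := congrArg ρ.asAlgebraHom (of_mul_conjSum g h)
    rw [map_mul, map_mul, ρ.asAlgebraHom_of] at this
    exact this.symm⟩
  obtain ⟨c, hc⟩ := endomorphism_simple_eq_smul_id ℂ f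
  have hc' : c • (LinearMap.id : V →ₗ[ℂ] V) = ρ.asAlgebraHom (conjSum g) :=
    congrArg (fun f : V ⟶ V => f.hom.hom.hom) hc
  have hid : (1 : V →ₗ[ℂ] V) ≠ 0 := by
    intro h0
    apply id_nonzero V
    ext1
    ext1
    exact h0
  have : Nontrivial V := by
    by_contra hn
    rw [not_nontrivial_iff_subsingleton] at hn
    exact hid (Subsingleton.elim _ _)
  rw [← hc', map_smul, LinearMap.trace_id, smul_eq_mul, mul_eq_zero] at ht
  have hc0 : c = 0 := ht.resolve_right (by
    exact_mod_cast (Module.finrank_pos (R := ℂ) (M := V)).ne')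
  have hz : ρ.asAlgebraHom (conjSum g) = 0 := by rw [← hc', hc0, zero_smul]
  have hu' := hu.map ρ.asAlgebraHom
  rw [hz, isUnit_zero_iff] at hu'
  exact hid hu'.symm

theorem isVanishing_of_simpleModule {G : Type} [Group G] [Fintype G] {g : G}
    (M : Type) [AddCommGroup M] [Module ℂ M] [Module (MonoidAlgebra ℂ G) M]
    [IsScalarTower ℂ (MonoidAlgebra ℂ G) M]
    [hs : IsSimpleModule (MonoidAlgebra ℂ G) M] (hK : ∀ m : M, conjSum g • m = 0) :
    IsVanishing g := by
  let ρ : Representation ℂ G M := Representation.ofModule' (k := ℂ) (G := G) M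
  have hact : ∀ (r : MonoidAlgebra ℂ G) (m : M), ρ.asAlgebraHom r m = r • m := by
    intro r m
    have : ρ.asAlgebraHom = Algebra.lsmul ℂ ℂ M :=
      (MonoidAlgebra.lift ℂ (M →ₗ[ℂ] M) G).apply_symm_apply _
    rw [this]
    rfl
  have hirr : ρ.IsIrreducible := by
    rw [Representation.irreducible_iff_isSimpleModule_asModule]
    let e : ρ.asModule ≃ₗ[MonoidAlgebra ℂ G] M :=
      { ρ.asModuleEquiv with
        map_smul' := fun r x => (ρ.asModuleEquiv_map_smul r x).trans (hact r _) }
    exact IsSimpleModule.congr e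
  have hfin0 : Module.Finite ℂ (MonoidAlgebra ℂ G) := inferInstance
  have hfin : Module.Finite ℂ M := Module.Finite.trans (MonoidAlgebra ℂ G) _
  refine ⟨FDRep.of ρ, simple_of_isIrreducible ρ, ?_⟩
  have hz : ρ.asAlgebraHom (conjSum g) = 0 := by
    ext m
    rw [hact, hK]
    simp
  have ht := trace_conjSum ρ g
  rw [hz, map_zero] at ht
  exact (mul_eq_zero.mp ht.symm).resolve_left (by exact_mod_cast Fintype.card_ne_zero)

theorem isVanishing_of_not_isUnit {G : Type} [Group G] [Fintype G] {g : G}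
    (h : ¬ IsUnit (conjSum g)) : IsVanishing g := by
  have hne : Ideal.span {conjSum g} ≠ ⊤ := by
    intro ht
    rw [Ideal.eq_top_iff_one, Ideal.mem_span_singleton'] at ht
    obtain ⟨r, hr⟩ := ht
    exact h (isUnit_iff_exists.mpr ⟨r, by rw [← mul_conjSum, hr], hr⟩)
  obtain ⟨I, hI, hle⟩ := Ideal.exists_le_maximal _ hne
  have hmem : conjSum g ∈ I := hle (Ideal.mem_span_singleton_self _)
  let M := MonoidAlgebra ℂ G ⧸ I
  have hs : IsSimpleModule (MonoidAlgebra ℂ G) M := isSimpleModule_iff_isCoatom.mpr hI.out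
  have hK : ∀ m : M, conjSum g • m = 0 := by
    intro m
    obtain ⟨r, rfl⟩ := Submodule.Quotient.mk_surjective I m
    rw [← Submodule.Quotient.mk_smul, Submodule.Quotient.mk_eq_zero, smul_eq_mul, ← mul_conjSum]
    exact I.mul_mem_left r hmem
  exact isVanishing_of_simpleModule M hK

theorem isVanishing_iff {G : Type} [Group G] [Fintype G] {g : G} :
    IsVanishing g ↔ ¬ IsUnit (conjSum g) :=
  ⟨not_isUnit_of_isVanishing, isVanishing_of_not_isUnit⟩

theorem isUnit_mapDomain_iff {H G : Type} [Group H] [Group G] [Finite H] (f : H →* G)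
    (hf : Function.Injective f) (u : MonoidAlgebra ℂ H) :
    IsUnit (MonoidAlgebra.mapDomainRingHom ℂ f u) ↔ IsUnit u := by
  refine ⟨fun h => ?_, fun h => h.map _⟩
  have hinj : Function.Injective (MonoidAlgebra.mapDomainRingHom ℂ f) :=
    MonoidAlgebra.mapDomain_injective hf
  have hfin : Module.Finite ℂ (MonoidAlgebra ℂ H) := inferInstance
  have hl : Function.Surjective (LinearMap.mulLeft ℂ u) := by
    apply LinearMap.surjective_of_injective
    intro x y hxy
    apply hinj
    apply h.mul_left_cancel
    rw [← map_mul, ← map_mul]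
    exact congrArg _ hxy
  have hr : Function.Surjective (LinearMap.mulRight ℂ u) := by
    apply LinearMap.surjective_of_injective
    intro x y hxy
    apply hinj
    apply h.mul_right_cancel
    rw [← map_mul, ← map_mul]
    exact congrArg _ hxy
  obtain ⟨v, hv⟩ := hl 1
  obtain ⟨w, hw⟩ := hr 1
  simp only [LinearMap.mulLeft_apply, LinearMap.mulRight_apply] at hv hw
  have hvw : w = v := left_inv_eq_right_inv hw hv
  exact isUnit_iff_exists.mpr ⟨v, hv, hvw ▸ hw⟩

theorem map_conjSum_mk {G : Type} [Group G] [Fintype G] (B : Subgroup G) [B.Normal]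
    [Fintype (G ⧸ B)] (a : G) :
    MonoidAlgebra.mapDomainRingHom ℂ (QuotientGroup.mk' B) (conjSum a) =
      (Nat.card B : ℂ) • conjSum (QuotientGroup.mk a : G ⧸ B) := by
  classical
  unfold conjSum
  rw [map_sum, Finset.smul_sum,
    ← Finset.sum_fiberwise (s := Finset.univ) (g := fun x : G => (QuotientGroup.mk x : G ⧸ B))]
  refine Finset.sum_congr rfl fun q _ => ?_
  rw [Finset.sum_congr (g := fun _ => MonoidAlgebra.of ℂ (G ⧸ B) (q * QuotientGroup.mk a * q⁻¹)) rfl]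
  · rw [Finset.sum_const, ← Nat.cast_smul_eq_nsmul ℂ]
    congr 2
    obtain ⟨y, rfl⟩ := QuotientGroup.mk_surjective q
    rw [Nat.card_eq_fintype_card, ← Finset.card_univ]
    symm
    refine Finset.card_bij (fun b _ => y * (b : G)) ?_ ?_ ?_
    · intro b _
      simp
    · intro b _ b' _ hb
      exact Subtype.ext (mul_left_cancel hb)
    · intro x hx
      rw [Finset.mem_filter] at hx
      exact ⟨⟨y⁻¹ * x, QuotientGroup.eq.mp hx.2.symm⟩, Finset.mem_univ _, by simp⟩
  · intro x hx
    rw [Finset.mem_filter] at hx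
    rw [← hx.2]
    simp

theorem vanishing_iff_vanishing_in_quotient (G : Type) [Group G] [Fintype G]
    (A B : Subgroup G) [A.Normal] [B.Normal] (hAB : A ⊓ B = ⊥)
    (a : G) (ha : a ∈ A) :
    IsVanishing a ↔ IsVanishing (QuotientGroup.mk a : G ⧸ B) := by
  classical
  have : Fintype (G ⧸ B) := Fintype.ofFinite _
  rw [isVanishing_iff, isVanishing_iff, not_iff_not]
  let u : MonoidAlgebra ℂ A :=
    ∑ x : G, MonoidAlgebra.of ℂ A ⟨x * a * x⁻¹, Subgroup.Normal.conj_mem inferInstance a ha x⟩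
  have h1 : MonoidAlgebra.mapDomainRingHom ℂ A.subtype u = conjSum a := by
    simp only [u, conjSum, map_sum]
    refine Finset.sum_congr rfl fun x _ => ?_
    simp
  have h2 : MonoidAlgebra.mapDomainRingHom ℂ ((QuotientGroup.mk' B).comp A.subtype) u =
      (Nat.card B : ℂ) • conjSum (QuotientGroup.mk a : G ⧸ B) := by
    rw [← map_conjSum_mk, ← h1, MonoidAlgebra.mapDomainRingHom_comp]
    rfl
  have hinj : Function.Injective ((QuotientGroup.mk' B).comp A.subtype) := by
    rw [injective_iff_map_eq_one]
    intro x hx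
    have hxB : (x : G) ∈ B := (QuotientGroup.eq_one_iff _).mp hx
    have : (x : G) ∈ A ⊓ B := ⟨x.2, hxB⟩
    rw [hAB, Subgroup.mem_bot] at this
    exact Subtype.ext this
  have hB : IsUnit (Nat.card B : ℂ) := (Nat.cast_ne_zero.mpr Nat.card_pos.ne').isUnit
  rw [← h1, isUnit_mapDomain_iff _ A.subtype_injective, ← isUnit_mapDomain_iff _ hinj, h2]
  obtain ⟨c, hc⟩ := hB
  rw [← hc]
  exact isUnit_smul_iff c _
end

section
/- Let A be a normal subgroup of a finite group G and let a ∈ A. Then a is a vanishing element of G (i.e., χ(a) = 0 for some irreducible character χ of G) if and only if there exists an irreducible character α of A such that the induced character α^G vanishes at a, i.e., α^G(a) = 0. -/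
open scoped Classical in
/-- The induced class function `α^G` of a class function `α` on a subgroup `A`. -/
noncomputable def inducedChar {G : Type} [Group G] [Fintype G] (A : Subgroup G)
    (α : A → ℂ) (g : G) : ℂ :=
  (Nat.card A : ℂ)⁻¹ *
    ∑ x : G, if h : x⁻¹ * g * x ∈ A then α ⟨x⁻¹ * g * x, h⟩ else 0

open CategoryTheory

namespace VanishAux

/-- Elementary irreducibility. -/
def Irr {H M : Type} [Group H] [AddCommGroup M] [Module ℂ M] (ρ : Representation ℂ H M) : Prop :=
  Nontrivial M ∧ ∀ p : Submodule ℂ M, (∀ g, ∀ v ∈ p, ρ g v ∈ p) → p = ⊥ ∨ p = ⊤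

/-- Restriction to an invariant submodule. -/
def sub {H M : Type} [Group H] [AddCommGroup M] [Module ℂ M] (ρ : Representation ℂ H M)
    (p : Submodule ℂ M) (hp : ∀ g, ∀ v ∈ p, ρ g v ∈ p) : Representation ℂ H p where
  toFun g := (ρ g).restrict (hp g)
  map_one' := by ext; simp
  map_mul' x y := by ext; simp

/-- Morphism from an equivariant linear map. -/
def mkHom {H : Type} [Group H] (V W : FDRep ℂ H) (f : V →ₗ[ℂ] W)
    (h : ∀ g v, f (V.ρ g v) = W.ρ g (f v)) : V ⟶ W :=
  ⟨InducedCategory.homMk (ModuleCat.ofHom f), fun g ↦ by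
    ext v
    exact h g v⟩

/-- Linear map of a morphism. -/
def lin {H : Type} [Group H] {V W : FDRep ℂ H} (f : V ⟶ W) : V →ₗ[ℂ] W := f.hom.hom.hom

lemma lin_comm {H : Type} [Group H] {V W : FDRep ℂ H} (f : V ⟶ W) (g : H) (v : V) :
    lin f (V.ρ g v) = W.ρ g (lin f v) :=
  ConcreteCategory.congr_hom ((forget (FGModuleCat ℂ)).congr_map (f.comm g)) v

lemma lin_ext {H : Type} [Group H] {V W : FDRep ℂ H} {f g : V ⟶ W} (h : lin f = lin g) : f = g := by
  ext v
  exact LinearMap.congr_fun h v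

lemma lin_mkHom {H : Type} [Group H] (V W : FDRep ℂ H) (f : V →ₗ[ℂ] W)
    (h : ∀ g v, f (V.ρ g v) = W.ρ g (f v)) : lin (mkHom V W f h) = f := rfl

lemma lin_comp {H : Type} [Group H] {U V W : FDRep ℂ H} (f : U ⟶ V) (g : V ⟶ W) :
    lin (f ≫ g) = lin g ∘ₗ lin f := rfl

lemma lin_id {H : Type} [Group H] (V : FDRep ℂ H) : lin (𝟙 V) = LinearMap.id := rfl

lemma lin_zero {H : Type} [Group H] (V W : FDRep ℂ H) : lin (0 : V ⟶ W) = 0 := rfl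

lemma irr_of_simple {H : Type} [Group H] (V : FDRep ℂ H) (hV : Simple V) : Irr V.ρ := by
  refine ⟨?_, fun p hp => ?_⟩
  · by_contra hn
    rw [not_nontrivial_iff_subsingleton] at hn
    apply id_nonzero V
    apply lin_ext
    ext v
    exact Subsingleton.elim _ _
  · by_cases hb : p = ⊥
    · exact Or.inl hb
    right
    let f : FDRep.of (sub V.ρ p hp) ⟶ V := mkHom (FDRep.of (sub V.ρ p hp)) V p.subtype
      (fun g v => rfl)
    have hf : lin f = p.subtype := rfl
    have hm : Mono f := ⟨fun a b hab => by
      apply lin_ext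
      have := congrArg lin hab
      rw [lin_comp, lin_comp, hf] at this
      ext v
      exact LinearMap.congr_fun this v⟩
    have h0 : f ≠ 0 := by
      intro h
      apply hb
      rw [eq_bot_iff]
      intro v hv
      have := LinearMap.congr_fun (congrArg lin h) (⟨v, hv⟩ : p)
      exact this
    have hi : IsIso f := (Simple.mono_isIso_iff_nonzero f).2 h0
    rw [eq_top_iff]
    intro v _
    have := LinearMap.congr_fun (congrArg lin (IsIso.inv_hom_id f)) v
    rw [lin_comp, lin_id] at this
    have h2 : (p.subtype (lin (inv f) v)) = v := this
    rw [← h2]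
    exact (lin (inv f) v : p).2

lemma simple_of_irr {H M : Type} [Group H] [AddCommGroup M] [Module ℂ M] [Module.Finite ℂ M]
    (ρ : Representation ℂ H M) (h : Irr ρ) : Simple (FDRep.of ρ) := by
  obtain ⟨hn, hs⟩ := h
  refine ⟨fun {Y} f hm => ⟨?_, ?_⟩⟩
  · rintro hi rfl
    obtain ⟨v, hv⟩ := exists_ne (0 : M)
    have := LinearMap.congr_fun (congrArg lin (IsIso.inv_hom_id (0 : Y ⟶ FDRep.of ρ))) v
    exact hv this.symm
  · intro h0
    have hsur : LinearMap.range (lin f) = ⊤ := by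
      refine (hs (LinearMap.range (lin f)) ?_).resolve_left ?_
      · rintro g _ ⟨w, rfl⟩
        exact ⟨Y.ρ g w, lin_comm f g w⟩
      · intro hb
        exact h0 (lin_ext (LinearMap.range_eq_bot.1 hb))
    have hK : ∀ g, ∀ v ∈ LinearMap.ker (lin f), Y.ρ g v ∈ LinearMap.ker (lin f) := by
      intro g v hv
      rw [LinearMap.mem_ker] at hv ⊢
      rw [lin_comm, hv, map_zero]
    have hinj : LinearMap.ker (lin f) = ⊥ := by
      let i : FDRep.of (sub Y.ρ _ hK) ⟶ Y := mkHom (FDRep.of (sub Y.ρ _ hK)) Y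
        (LinearMap.ker (lin f)).subtype (fun g v => rfl)
      have hi : i = 0 := by
        rw [← cancel_mono f]
        apply lin_ext
        ext v
        have h1 : lin f ((v : LinearMap.ker (lin f)) : Y) = 0 := (v : LinearMap.ker (lin f)).2
        rw [Limits.zero_comp]
        exact h1
      rw [eq_bot_iff]
      intro v hv
      exact LinearMap.congr_fun (congrArg lin hi) (⟨v, hv⟩ : LinearMap.ker (lin f))
    let e := LinearEquiv.ofBijective (lin f) ⟨LinearMap.ker_eq_bot.1 hinj, LinearMap.range_eq_top.1 hsur⟩
    have he : ∀ v, e v = lin f v := fun v => rfl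
    refine ⟨mkHom _ _ e.symm.toLinearMap ?_, ?_, ?_⟩
    · intro g v
      apply e.injective
      rw [he, he, lin_comm, ← he, ← he]
      simp only [LinearEquiv.coe_coe, LinearEquiv.apply_symm_apply]
    · apply lin_ext
      ext v
      exact e.symm_apply_apply v
    · apply lin_ext
      ext v
      exact e.apply_symm_apply v

lemma exists_sub {H M : Type} [Group H] [AddCommGroup M] [Module ℂ M] [Module.Finite ℂ M]
    [Nontrivial M] (ρ : Representation ℂ H M) :
    ∃ (p : Submodule ℂ M) (hp : ∀ g, ∀ v ∈ p, ρ g v ∈ p), Irr (sub ρ p hp) := by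
  obtain ⟨p, ⟨hp, hb⟩, hmin⟩ := WellFounded.has_min
    (wellFounded_lt : WellFounded ((· < ·) : Submodule ℂ M → Submodule ℂ M → Prop))
    {p | (∀ g, ∀ v ∈ p, ρ g v ∈ p) ∧ p ≠ ⊥} ⟨⊤, by simp, top_ne_bot⟩
  refine ⟨p, hp, Submodule.nontrivial_iff_ne_bot.2 hb, fun q hq => ?_⟩
  by_cases hqb : q = ⊥
  · exact Or.inl hqb
  right
  have h1 : q.map p.subtype ≤ p := Submodule.map_subtype_le p q
  have h2 : q.map p.subtype = p := by
    by_contra hne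
    refine hmin (q.map p.subtype) ⟨?_, ?_⟩ (lt_of_le_of_ne h1 hne)
    · rintro g _ ⟨w, hw, rfl⟩
      exact ⟨_, hq g w hw, rfl⟩
    · intro h
      apply hqb
      rw [eq_bot_iff]
      intro v hv
      have h3 : (v : M) ∈ q.map p.subtype := ⟨v, hv, rfl⟩
      rw [h, Submodule.mem_bot] at h3
      exact Subtype.ext h3
  rw [eq_top_iff]
  intro v _
  have : (v : M) ∈ q.map p.subtype := h2.symm.le v.2
  obtain ⟨w, hw, e⟩ := this
  have : w = v := Subtype.ext e
  exact this ▸ hw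

lemma schur {H M : Type} [Group H] [AddCommGroup M] [Module ℂ M] [Module.Finite ℂ M]
    (ρ : Representation ℂ H M) (h : Irr ρ) (T : M →ₗ[ℂ] M)
    (hT : ∀ g v, T (ρ g v) = ρ g (T v)) : ∃ c : ℂ, ∀ v, T v = c • v := by
  obtain ⟨hn, hs⟩ := h
  obtain ⟨c, hc⟩ := Module.End.exists_eigenvalue T
  refine ⟨c, fun v => ?_⟩
  have := (hs (Module.End.eigenspace T c) ?_).resolve_left hc
  · exact Module.End.mem_eigenspace_iff.1 (this ▸ Submodule.mem_top)
  · intro g v hv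
    rw [Module.End.mem_eigenspace_iff] at hv ⊢
    rw [hT, hv, map_smul]

section
variable {G : Type} [Group G] [Fintype G]

/-- class sum action of `G` -/
noncomputable def TG {M : Type} [AddCommGroup M] [Module ℂ M] (ρ : Representation ℂ G M) (a : G) :
    M →ₗ[ℂ] M := ∑ x : G, ρ (x⁻¹ * a * x)

/-- class sum action of `A` -/
noncomputable def TA (A : Subgroup G) [hA : A.Normal] {M : Type} [AddCommGroup M] [Module ℂ M]
    (σ : Representation ℂ A M) (a : G) (ha : a ∈ A) :
    M →ₗ[ℂ] M := ∑ x : G, σ ⟨x⁻¹ * a * x, hA.conj_mem' a ha x⟩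

lemma TG_comm {M : Type} [AddCommGroup M] [Module ℂ M] (ρ : Representation ℂ G M) (a : G)
    (g : G) (v : M) : TG ρ a (ρ g v) = ρ g (TG ρ a v) := by
  simp only [TG, LinearMap.sum_apply, map_sum, ← Module.End.mul_apply, ← map_mul]
  refine Fintype.sum_equiv (Equiv.mulRight g) _ _ fun x => ?_
  simp [mul_assoc]

lemma exists_sub' {M : Type} [AddCommGroup M] [Module ℂ M] [Module.Finite ℂ M]
    [Nontrivial M] (ρ : Representation ℂ G M) (a : G) :
    ∃ (p : Submodule ℂ M) (hp : ∀ g, ∀ v ∈ p, ρ g v ∈ p), Irr (sub ρ p hp) ∧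
      ∃ c : ℂ, ∀ v, TG (sub ρ p hp) a v = c • v := by
  obtain ⟨p, hp, hirr⟩ := exists_sub ρ
  exact ⟨p, hp, hirr, schur _ hirr (TG (sub ρ p hp) a) (TG_comm (sub ρ p hp) a)⟩

lemma TG_trace (V : FDRep ℂ G) (a : G) (c : ℂ) (hc : ∀ v, TG V.ρ a v = c • v) :
    (Fintype.card G : ℂ) * V.character a = c * Module.finrank ℂ V := by
  have h1 : TG V.ρ a = c • LinearMap.id := LinearMap.ext hc
  have h2 := congrArg (LinearMap.trace ℂ V) h1
  rw [map_smul, LinearMap.trace_id, smul_eq_mul, TG, map_sum] at h2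
  rw [← h2, Finset.sum_congr rfl (g := fun _ => V.character a)]
  · simp
  · intro x _
    have := V.char_conj a x⁻¹
    rw [inv_inv] at this
    exact this

lemma TA_trace (A : Subgroup G) [hA : A.Normal] (W : FDRep ℂ A) (a : G) (ha : a ∈ A) (c : ℂ)
    (hc : ∀ v, TA A W.ρ a ha v = c • v) :
    inducedChar A W.character a = (Nat.card A : ℂ)⁻¹ * (c * Module.finrank ℂ W) := by
  have h1 : TA A W.ρ a ha = c • LinearMap.id := LinearMap.ext hc
  have h2 := congrArg (LinearMap.trace ℂ W) h1
  rw [map_smul, LinearMap.trace_id, smul_eq_mul, TA, map_sum] at h2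
  rw [← h2, inducedChar]
  congr 1
  refine Finset.sum_congr rfl fun x _ => ?_
  rw [dif_pos (hA.conj_mem' a ha x)]
  rfl

lemma key (A : Subgroup G) [hA : A.Normal] (V : FDRep ℂ G) (W : FDRep ℂ A) (a : G) (ha : a ∈ A)
    (hV : Irr V.ρ) (hW : Irr W.ρ) (c : ℂ) (hc : ∀ v, TG V.ρ a v = c • v)
    (hc' : ∀ v, TA A W.ρ a ha v = c • v) :
    V.character a = 0 ↔ inducedChar A W.character a = 0 := by
  have := hV.1
  have := hW.1
  have hdV : (Module.finrank ℂ V : ℂ) ≠ 0 := by exact_mod_cast Module.finrank_pos.ne'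
  have hdW : (Module.finrank ℂ W : ℂ) ≠ 0 := by exact_mod_cast Module.finrank_pos.ne'
  have hG : (Fintype.card G : ℂ) ≠ 0 := by exact_mod_cast Fintype.card_ne_zero
  have hAc : (Nat.card A : ℂ) ≠ 0 := by exact_mod_cast Nat.card_pos.ne'
  have h1 := TG_trace V a c hc
  rw [TA_trace A W a ha c hc']
  constructor
  · intro h
    rw [h, mul_zero] at h1
    rw [(mul_eq_zero.1 h1.symm).resolve_right hdV, zero_mul, mul_zero]
  · intro h
    have : c = 0 := by
      simpa [hdW, hAc] using h
    rw [this, zero_mul] at h1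
    exact (mul_eq_zero.1 h1).resolve_left hG

lemma back (A : Subgroup G) [A.Normal] (W : FDRep ℂ A) (a : G) (ha : a ∈ A)
    (iW : Irr W.ρ) (h0 : inducedChar A W.character a = 0)
    {U : Type} [AddCommGroup U] [Module ℂ U] [Module.Finite ℂ U] [Nontrivial U]
    (r : Representation ℂ G U) (e : U →ₗ[ℂ] W)
    (he : ∀ (b : A) (u : U), e (r b u) = W.ρ b (e u))
    (he' : ∀ u : U, (∀ g, e (r g u) = 0) → u = 0) : IsVanishing a := by
  obtain ⟨p, hp, hirr, c, hc⟩ := exists_sub' r a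
  refine ⟨FDRep.of (sub r p hp), simple_of_irr _ hirr, ?_⟩
  refine (key A (FDRep.of (sub r p hp)) W a ha hirr iW c hc ?_).2 h0
  let ev : p →ₗ[ℂ] W := e ∘ₗ p.subtype
  have hev : ∀ (b : A) (v : p), ev (sub r p hp b v) = W.ρ b (ev v) := fun b v => he b v
  have hsur : LinearMap.range ev = ⊤ := by
    refine (iW.2 (LinearMap.range ev) ?_).resolve_left ?_
    · rintro g _ ⟨w, rfl⟩
      exact ⟨_, hev g w⟩
    · intro hb
      have h0 := LinearMap.range_eq_bot.1 hb
      have := hirr.1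
      obtain ⟨v, hv⟩ := exists_ne (0 : p)
      apply hv
      apply Subtype.ext
      exact he' v fun g => LinearMap.congr_fun h0 (sub r p hp g v)
  intro w
  obtain ⟨v, rfl⟩ := LinearMap.range_eq_top.1 hsur w
  rw [← map_smul, ← hc]
  simp only [TA, TG, LinearMap.sum_apply, map_sum]
  exact Finset.sum_congr rfl fun x _ => (hev _ v).symm

end

end VanishAux

open VanishAux in
theorem vanishing_iff_induced_char_zero (G : Type) [Group G] [Fintype G]
    (A : Subgroup G) [A.Normal] (a : G) (ha : a ∈ A) :
    IsVanishing a ↔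
      ∃ W : FDRep ℂ A, CategoryTheory.Simple W ∧ inducedChar A W.character a = 0 := by
  constructor
  · rintro ⟨V, hV, h0⟩
    have iV := irr_of_simple V hV
    obtain ⟨c, hc⟩ := schur V.ρ iV (TG V.ρ a) (TG_comm V.ρ a)
    have := iV.1
    let r : Representation ℂ A V := V.ρ.comp A.subtype
    obtain ⟨p, hp, hirr⟩ := exists_sub r
    refine ⟨FDRep.of (sub r p hp), simple_of_irr _ hirr, ?_⟩
    refine (key A V (FDRep.of (sub r p hp)) a ha iV hirr c hc ?_).1 h0
    intro v
    change TA A (sub r p hp) a ha v = c • v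
    apply Subtype.ext
    have h := hc (v : p).1
    simp only [TA, TG, LinearMap.sum_apply] at h ⊢
    rw [Submodule.coe_sum]
    exact h
  · rintro ⟨W, hW, h0⟩
    have iW := irr_of_simple W hW
    let U := Representation.coindV A.subtype W.ρ
    let r : Representation ℂ G U := Representation.coind A.subtype W.ρ
    have hfin : Module.Finite ℂ U := by
      have : Module.Finite ℂ (G → W) := inferInstance
      infer_instance
    have hnt : Nontrivial U := by
      classical
      have := iW.1
      obtain ⟨w, hw⟩ := exists_ne (0 : W)
      let f : G → W := fun g => if h : g ∈ A then W.ρ ⟨g, h⟩ w else 0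
      have hf : f ∈ U := by
        intro g h
        by_cases hh : h ∈ A
        · have h3 : (A.subtype g * h) ∈ A := A.mul_mem g.2 hh
          simp only [f, dif_pos hh, dif_pos h3]
          rw [← Module.End.mul_apply, ← map_mul]
          rfl
        · have h3 : (A.subtype g * h) ∉ A := fun h4 => hh ((A.mul_mem_cancel_left g.2).1 h4)
          simp only [f, dif_neg hh, dif_neg h3, map_zero]
      refine ⟨⟨⟨f, hf⟩, 0, fun h => hw ?_⟩⟩
      have h1 : f 1 = 0 := congrFun (congrArg Subtype.val h) 1
      have h2 : f 1 = W.ρ 1 w := dif_pos A.one_mem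
      rw [h1, map_one] at h2
      exact h2.symm
    refine back A W a ha iW h0 r ((LinearMap.proj (1 : G)) ∘ₗ U.subtype) ?_ ?_
    · intro b v
      have h2 := v.2 b 1
      rw [mul_one] at h2
      change v.1 (1 * (b : G)) = W.ρ b (v.1 1)
      rw [one_mul]
      exact h2
    · intro v hv
      apply Subtype.ext
      funext g
      have h1 : v.1 (1 * g) = 0 := hv g
      rw [one_mul] at h1
      exact h1
end

section
/- Let G be a finite group with normal subgroups N ≤ M such that there exists an irreducible character ν of N whose inertia subgroup in M equals N (i.e., I_M(ν) = N). Then every element of M \ N is a vanishing element of G. -/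
namespace VanishAux

open Module

section lin

variable {V U : Type} [AddCommGroup V] [Module ℂ V] [FiniteDimensional ℂ V]
  [AddCommGroup U] [Module ℂ U] [FiniteDimensional ℂ U]

/-- The operator `A ↦ a ∘ A ∘ b` on `Hom(V, U)`. -/
noncomputable def sandwich (a : U →ₗ[ℂ] U) (b : V →ₗ[ℂ] V) :
    (V →ₗ[ℂ] U) →ₗ[ℂ] (V →ₗ[ℂ] U) where
  toFun A := a ∘ₗ A ∘ₗ b
  map_add' x y := by ext; simp
  map_smul' c x := by ext; simp

theorem trace_sandwich (a : U →ₗ[ℂ] U) (b : V →ₗ[ℂ] V) :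
    LinearMap.trace ℂ _ (sandwich a b) = LinearMap.trace ℂ _ a * LinearMap.trace ℂ _ b := by
  have h : sandwich a b = (dualTensorHomEquiv ℂ V U).conj
      (TensorProduct.map (Module.Dual.transpose (R := ℂ) b) a) := by
    rw [LinearEquiv.conj_apply, LinearEquiv.eq_comp_toLinearMap_symm]
    apply TensorProduct.ext'
    intro f u
    ext v
    simp [sandwich]
    rfl
  rw [h, LinearMap.trace_conj', LinearMap.trace_tensorProduct', LinearMap.trace_transpose', mul_comm]

end lin

section irr

variable {G : Type} [Group G] {V : Type} [AddCommGroup V] [Module ℂ V] [FiniteDimensional ℂ V]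

theorem schur_s11 [Nontrivial V] (ρ : Representation ℂ G V)
    (hirr : ∀ P : Submodule ℂ V, (∀ g, ∀ v ∈ P, ρ g v ∈ P) → P = ⊥ ∨ P = ⊤)
    (E : V →ₗ[ℂ] V) (hE : ∀ g, E * ρ g = ρ g * E) : ∃ c : ℂ, E = c • 1 := by
  obtain ⟨c, hc⟩ := Module.End.exists_eigenvalue E
  refine ⟨c, ?_⟩
  rcases hirr (Module.End.eigenspace E c) (by
    intro g v hv
    rw [Module.End.mem_eigenspace_iff] at hv ⊢
    have := congrArg (fun f => f v) (hE g)
    simp only [Module.End.mul_apply] at this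
    rw [this, hv, map_smul]) with h | h
  · exact absurd h hc
  · ext v
    have : v ∈ Module.End.eigenspace E c := by rw [h]; trivial
    rw [Module.End.mem_eigenspace_iff] at this
    simpa using this

theorem simple_of [Fintype G] [Nontrivial V] (ρ : Representation ℂ G V)
    (hirr : ∀ P : Submodule ℂ V, (∀ g, ∀ v ∈ P, ρ g v ∈ P) → P = ⊥ ∨ P = ⊤) :
    CategoryTheory.Simple (FDRep.of ρ) := by
  rw [FDRep.simple_iff_end_is_rank_one,
    ← (Representation.linHom.invariantsEquivFDRepHom (FDRep.of ρ) (FDRep.of ρ)).finrank_eq]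
  change finrank ℂ (Representation.linHom ρ ρ).invariants = 1
  have hid : (1 : V →ₗ[ℂ] V) ∈ (Representation.linHom ρ ρ).invariants := by
    intro g
    ext v
    simp
  refine finrank_eq_one (⟨1, hid⟩ : (Representation.linHom ρ ρ).invariants) ?_ ?_
  · intro h
    have := congrArg Subtype.val h
    exact one_ne_zero this
  · rintro ⟨f, hf⟩
    obtain ⟨c, hc⟩ := schur_s11 ρ hirr f (by
      intro g
      have := hf g
      rw [Representation.linHom_apply] at this
      ext v
      have h2 := congrArg (fun F => F (ρ g v)) this
      simpa using h2.symm)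
    exact ⟨c, Subtype.ext hc.symm⟩

end irr

section exist

variable {G : Type} [Group G] [Fintype G] (N : Subgroup G)
  {U : Type} [AddCommGroup U] [Module ℂ U] [FiniteDimensional ℂ U] [Nontrivial U]

/-- Right translation on functions. -/
def rt (G : Type) [Group G] (U : Type) [AddCommGroup U] [Module ℂ U] :
    Representation ℂ G (G → U) where
  toFun g := { toFun := fun f x => f (x * g), map_add' := fun _ _ => rfl,
               map_smul' := fun _ _ => rfl }
  map_one' := by ext; simp
  map_mul' a b := by
    apply LinearMap.ext; intro f; funext x; simp [mul_assoc]

theorem rt_apply (g : G) (f : G → U) (x : G) : rt G U g f x = f (x * g) := rfl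

theorem exists_irr (σ : Representation ℂ N U) :
    ∃ (V : Type) (_ : AddCommGroup V) (_ : Module ℂ V) (_ : FiniteDimensional ℂ V)
      (_ : Nontrivial V) (ρ : Representation ℂ G V),
      (∀ P : Submodule ℂ V, (∀ g, ∀ v ∈ P, ρ g v ∈ P) → P = ⊥ ∨ P = ⊤) ∧
      ∃ A : V →ₗ[ℂ] U, A ≠ 0 ∧ ∀ (n : N) (v : V), A (ρ n v) = σ n (A v) := by
  classical
  let S : Set (Submodule ℂ (G → U)) := {P | P ≠ ⊥ ∧ (∀ g, ∀ f ∈ P, rt G U g f ∈ P) ∧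
    ∀ f ∈ P, ∀ (n : N) (x : G), f (n * x) = σ n (f x)}
  have hS : S.Nonempty := by
    let C : Submodule ℂ (G → U) :=
      { carrier := {f | ∀ (n : N) (x : G), f (n * x) = σ n (f x)}
        add_mem' := by
          intro a b ha hb n x
          simp [ha n x, hb n x]
        zero_mem' := by intro n x; simp
        smul_mem' := by
          intro c a ha n x
          simp [ha n x] }
    refine ⟨C, ?_, ?_, fun f hf => hf⟩
    · obtain ⟨u, hu⟩ := exists_ne (0 : U)
      rw [Submodule.ne_bot_iff]
      refine ⟨fun g => if h : g ∈ N then σ ⟨g, h⟩ u else 0, ?_, ?_⟩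
      · intro n x
        by_cases hx : x ∈ N
        · have h1 : (n : G) * x ∈ N := N.mul_mem n.2 hx
          simp only [hx, h1, dif_pos]
          rw [← Module.End.mul_apply, ← map_mul]
          rfl
        · have h1 : (n : G) * x ∉ N := by
            rwa [N.mul_mem_cancel_left n.2]
          simp [hx, h1]
      · intro h
        have := congrFun h 1
        simp only [N.one_mem, dif_pos, Pi.zero_apply] at this
        have h2 : σ 1 u = 0 := this
        simp at h2
        exact hu h2
    · intro g f hf n x
      rw [rt_apply, rt_apply, mul_assoc]
      exact hf n _
  obtain ⟨P, ⟨hP0, hPst, hPC⟩, hmin⟩ := WellFounded.has_min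
    (wellFounded_lt (α := Submodule ℂ (G → U))) S hS
  let ρ : Representation ℂ G P :=
    { toFun := fun g => (rt G U g).restrict (hPst g)
      map_one' := by ext; simp
      map_mul' := by intro x y; ext; simp }
  have hρ : ∀ g (v : P), ((ρ g v : P) : G → U) = rt G U g v := fun _ _ => rfl
  refine ⟨P, inferInstance, inferInstance, inferInstance,
    Submodule.nontrivial_iff_ne_bot.2 hP0, ρ, ?_, ?_⟩
  · intro Q hQ
    by_contra! hcon
    refine hmin (Q.map P.subtype) ⟨?_, ?_, ?_⟩ ?_
    · intro h
      exact hcon.1 (Submodule.map_injective_of_injective P.injective_subtype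
        (h.trans (Submodule.map_bot _).symm))
    · rintro g _ ⟨v, hv, rfl⟩
      exact ⟨ρ g v, hQ g v hv, rfl⟩
    · rintro _ ⟨v, hv, rfl⟩
      exact hPC _ v.2
    · refine lt_of_le_of_ne (Submodule.map_subtype_le _ _) ?_
      intro h
      apply hcon.2
      rw [eq_top_iff]
      intro v _
      have : (v : G → U) ∈ Q.map P.subtype := by rw [h]; exact v.2
      obtain ⟨w, hw, hwv⟩ := this
      rwa [← Subtype.ext hwv]
  · refine ⟨(LinearMap.proj 1 : (G → U) →ₗ[ℂ] U) ∘ₗ P.subtype, ?_, ?_⟩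
    · intro h
      obtain ⟨f, hf, hf0⟩ := (Submodule.ne_bot_iff _).1 hP0
      apply hf0
      funext x
      have := congrArg (fun F => F (ρ x ⟨f, hf⟩)) h
      simpa [hρ, rt_apply] using this
    · intro n v
      have := hPC v v.2 n 1
      simpa [hρ, rt_apply] using this

end exist

section main

variable {G : Type} [Group G] [Fintype G] {N : Subgroup G} [N.Normal] [Fintype N]
  {V U : Type} [AddCommGroup V] [Module ℂ V] [FiniteDimensional ℂ V]
  [AddCommGroup U] [Module ℂ U] [FiniteDimensional ℂ U]

theorem trace_zero (σ : Representation ℂ N U) (ρ : Representation ℂ G V) (h : G)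
    (hS : ∑ n : N, σ n * σ (MulAut.conjNormal h n⁻¹) = 0) :
    ∑ n : N, LinearMap.trace ℂ _ (σ n) * LinearMap.trace ℂ _ (ρ ((n : G)⁻¹ * h)) = 0 := by
  let T : (V →ₗ[ℂ] U) →ₗ[ℂ] (V →ₗ[ℂ] U) := ∑ n : N, sandwich (σ n) (ρ ((n : G)⁻¹ * h))
  have hT : T * T = 0 := by
    apply LinearMap.ext
    intro A
    have h1 : ∀ n' : N, ∑ n : N, sandwich (σ n') (ρ ((n' : G)⁻¹ * h))
          (sandwich (σ n) (ρ ((n : G)⁻¹ * h)) A)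
        = (σ n' * σ (MulAut.conjNormal h n'⁻¹)) ∘ₗ ∑ m : N, (σ m ∘ₗ A ∘ₗ ρ ((m : G)⁻¹ * h * h)) := by
      intro n'
      rw [← Equiv.sum_comp (Equiv.mulLeft (MulAut.conjNormal h n'⁻¹))]
      ext v
      rw [LinearMap.comp_apply, LinearMap.sum_apply, LinearMap.sum_apply, map_sum]
      refine Finset.sum_congr rfl fun m _ => ?_
      simp only [sandwich, LinearMap.coe_mk, AddHom.coe_mk, LinearMap.comp_apply,
        Equiv.coe_mulLeft, map_mul, Module.End.mul_apply]
      congr 3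
      simp only [← Module.End.mul_apply, ← map_mul]
      have hg : ((MulAut.conjNormal h n'⁻¹ * m : N) : G)⁻¹ * h * ((n' : G)⁻¹ * h)
          = (m : G)⁻¹ * h * h := by
        rw [Subgroup.coe_mul, MulAut.conjNormal_apply, Subgroup.coe_inv]
        group
      rw [← mul_assoc, hg, mul_assoc]
    simp only [T, Module.End.mul_apply, LinearMap.sum_apply, map_sum]
    try rw [Finset.sum_comm]
    simp only [h1]
    ext v
    rw [LinearMap.sum_apply]
    simp only [LinearMap.comp_apply]
    rw [← LinearMap.sum_apply, hS]
    simp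
  have hn : IsNilpotent T := ⟨2, by rw [pow_two, hT]⟩
  have := (LinearMap.isNilpotent_trace_of_isNilpotent hn).eq_zero
  simpa [T, map_sum, trace_sandwich] using this

theorem sum_ne_zero_of_intertwining {H : Type} [Group H] [Fintype H] (σ : Representation ℂ H U)
    (ρ : Representation ℂ H V) (A : V →ₗ[ℂ] U) (hA : A ≠ 0)
    (hc : ∀ n v, A (ρ n v) = σ n (A v)) :
    ∑ n : H, σ.character n * ρ.character n⁻¹ ≠ 0 := by
  intro h0
  have : Invertible (Nat.card H : ℂ) := invertibleOfNonzero (by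
    exact_mod_cast Nat.card_pos.ne')
  have h := Representation.card_inv_mul_sum_char_mul_char_eq_finrank ρ σ
  rw [h0, mul_zero, ← (Representation.invariantsEquivIntertwiningMap ρ σ).finrank_eq] at h
  have h1 : finrank ℂ (Representation.linHom ρ σ).invariants = 0 := by exact_mod_cast h.symm
  rw [Submodule.finrank_eq_zero] at h1
  have h2 : A ∈ (Representation.linHom ρ σ).invariants := by
    intro g
    ext v
    simp [Representation.linHom_apply, hc]
  rw [h1] at h2
  exact hA h2

theorem S_zero (ν : FDRep ℂ N) (hν : CategoryTheory.Simple ν) (h : G)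
    (hne : ¬ ∀ n : N, ν.character (MulAut.conjNormal h n) = ν.character n) :
    ∑ n : N, ν.ρ n * ν.ρ (MulAut.conjNormal h n⁻¹) = 0 := by
  by_contra hS
  apply hne
  let τ : Representation ℂ N ν := ν.ρ.comp (MulAut.conjNormal h : N ≃* N).toMonoidHom
  have hτ : ∀ n, (FDRep.of τ).character n = ν.character (MulAut.conjNormal h n) := fun _ => rfl
  have hsτ : CategoryTheory.Simple (FDRep.of τ) := by
    rw [FDRep.simple_iff_char_is_norm_one] at hν ⊢
    rw [← hν]
    simp only [hτ, map_inv]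
    exact Equiv.sum_comp (MulAut.conjNormal h : N ≃* N).toEquiv
      (fun n => ν.character n * ν.character n⁻¹)
  have key := sum_ne_zero_of_intertwining (H := N) ν.ρ τ _ hS (by
    intro m v
    rw [← Module.End.mul_apply, ← Module.End.mul_apply]
    congr 1
    rw [Finset.sum_mul, Finset.mul_sum, ← Equiv.sum_comp (Equiv.mulLeft m)]
    refine Finset.sum_congr rfl fun n _ => ?_
    change ν.ρ (m * n) * ν.ρ (MulAut.conjNormal h (m * n)⁻¹) * ν.ρ (MulAut.conjNormal h m) = _
    simp only [← map_mul, mul_assoc]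
    congr 3
    simp)
  have : Invertible (Nat.card N : ℂ) := invertibleOfNonzero (by
    exact_mod_cast Nat.card_pos.ne')
  have ho := FDRep.char_orthonormal ν (FDRep.of τ)
  by_cases hiso : Nonempty (ν ≅ FDRep.of τ)
  · obtain ⟨i⟩ := hiso
    intro n
    rw [← hτ, FDRep.char_iso i]
  · rw [if_neg hiso] at ho
    rcases mul_eq_zero.1 ho with h1 | h1
    · exact absurd h1 (inv_ne_zero (by exact_mod_cast Nat.card_pos.ne'))
    · exact absurd h1 key

theorem final [Nontrivial V] (σ : Representation ℂ N U) (ρ : Representation ℂ G V)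
    (hirr : ∀ P : Submodule ℂ V, (∀ g, ∀ v ∈ P, ρ g v ∈ P) → P = ⊥ ∨ P = ⊤) (g : G)
    (h0 : ∑ n : N, LinearMap.trace ℂ _ (σ n) * LinearMap.trace ℂ _ (ρ ((n : G)⁻¹)) ≠ 0)
    (hz : ∀ x : G, ∑ n : N, LinearMap.trace ℂ _ (σ n) *
      LinearMap.trace ℂ _ (ρ ((n : G)⁻¹ * (x⁻¹ * g * x))) = 0) :
    LinearMap.trace ℂ V (ρ g) = 0 := by
  let p : V →ₗ[ℂ] V := ∑ n : N, LinearMap.trace ℂ _ (σ n) • ρ ((n : G)⁻¹)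
  let E : V →ₗ[ℂ] V := ∑ x : G, ρ x * p * ρ x⁻¹
  have hp : LinearMap.trace ℂ _ p ≠ 0 := by
    simpa [p, map_sum] using h0
  have hpx : ∀ x : G, LinearMap.trace ℂ _ (p * ρ (x⁻¹ * g * x)) = 0 := by
    intro x
    rw [← hz x]
    simp only [p, Finset.sum_mul, map_sum, smul_mul_assoc, map_smul, smul_eq_mul, map_mul]
  obtain ⟨c, hc⟩ := schur_s11 ρ hirr E (by
    intro y
    simp only [E, Finset.sum_mul, Finset.mul_sum]
    rw [← Equiv.sum_comp (Equiv.mulLeft y)]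
    refine Finset.sum_congr rfl fun x _ => ?_
    simp only [Equiv.coe_mulLeft, mul_inv_rev, map_mul, mul_assoc]
    rw [← map_mul ρ y⁻¹ y]
    simp)
  have hE : LinearMap.trace ℂ _ E = Fintype.card G * LinearMap.trace ℂ _ p := by
    have : ∀ x : G, LinearMap.trace ℂ _ (ρ x * p * ρ x⁻¹) = LinearMap.trace ℂ _ p := by
      intro x
      rw [LinearMap.trace_mul_comm, ← mul_assoc, ← map_mul]
      simp
    simp [E, map_sum, this]
  have hEg : LinearMap.trace ℂ _ (E * ρ g) = 0 := by
    simp only [E, Finset.sum_mul, map_sum]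
    refine Finset.sum_eq_zero fun x _ => ?_
    rw [← hpx x, mul_assoc, mul_assoc, LinearMap.trace_mul_comm]
    simp only [map_mul, mul_assoc]
  have hc0 : c ≠ 0 := by
    rintro rfl
    rw [hc, zero_smul, map_zero] at hE
    have : (Fintype.card G : ℂ) ≠ 0 := by exact_mod_cast Fintype.card_ne_zero
    exact (mul_ne_zero this hp) hE.symm
  rw [hc, smul_mul_assoc, one_mul, map_smul, smul_eq_mul] at hEg
  exact (mul_eq_zero.1 hEg).resolve_left hc0

end main

end VanishAux

open VanishAux in
theorem vanishing_of_fully_induced (G : Type) [Group G] [Fintype G]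
    (N M : Subgroup G) [N.Normal] [M.Normal] (hNM : N ≤ M)
    (ν : FDRep ℂ N) (hν : CategoryTheory.Simple ν)
    (hinertia : ∀ m ∈ M,
      ((∀ (n : G) (hn : n ∈ N) (hmn : m⁻¹ * n * m ∈ N),
          ν.character ⟨m⁻¹ * n * m, hmn⟩ = ν.character ⟨n, hn⟩) ↔ m ∈ N)) :
    ∀ g ∈ M, g ∉ N → IsVanishing g := by
  classical
  intro g hgM hgN
  have : Fintype N := Fintype.ofFinite N
  have : Nontrivial ν := by
    by_contra hnt
    rw [not_nontrivial_iff_subsingleton] at hnt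
    rw [FDRep.simple_iff_char_is_norm_one] at hν
    have hz : ∀ n, ν.character n = 0 := by
      intro n
      have : ν.ρ n = 0 := Subsingleton.elim _ _
      rw [FDRep.character, this, map_zero]
    simp only [hz, mul_zero, Finset.sum_const_zero] at hν
    have h1 : (Nat.card N : ℂ) ≠ 0 := by exact_mod_cast Nat.card_pos.ne'
    exact h1 hν.symm
  obtain ⟨V, _, _, _, _, ρ, hirr, A, hA, hAc⟩ := exists_irr (G := G) N (U := ν) ν.ρ
  refine ⟨FDRep.of ρ, simple_of ρ hirr, ?_⟩
  refine final ν.ρ ρ hirr g ?_ ?_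
  · exact sum_ne_zero_of_intertwining ν.ρ (ρ.comp N.subtype) A hA hAc
  · intro x
    apply trace_zero
    apply S_zero ν hν
    intro hall
    have hxM : x⁻¹ * g * x ∈ M := by
      simpa using (inferInstance : M.Normal).conj_mem g hgM x⁻¹
    have hin := (hinertia _ (M.inv_mem hxM)).1 (by
      intro n hn hmn
      rw [← hall ⟨n, hn⟩]
      congr 1
      apply Subtype.ext
      simp only [MulAut.conjNormal_apply, inv_inv])
    have h2 := (inferInstance : N.Normal).conj_mem _ (N.inv_mem hin) x
    apply hgN
    have h3 : x * ((x⁻¹ * g * x)⁻¹)⁻¹ * x⁻¹ = g := by group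
    rwa [h3] at h2
end

section
/- Let A and B be finite groups with Z(B) ≤ A ≤ B and B/A cyclic. If every irreducible complex character of A is invariant under conjugation by B, then Z(A) = Z(B). In particular, if A ≠ B, then A is nonabelian. -/
open scoped MonoidAlgebra in
/-- An irreducible complex representation gives a simple object of `FDRep`. -/
lemma aux_simple_of_irreducible {G : Type} [Group G] [Fintype G] {V : Type} [AddCommGroup V]
    [Module ℂ V] [FiniteDimensional ℂ V] (ρ : Representation ℂ G V)
    [Representation.IsIrreducible ρ] : CategoryTheory.Simple (FDRep.of ρ) := by
  classical
  have hne : (Nat.card G : ℂ) ≠ 0 := Nat.cast_ne_zero.mpr Nat.card_pos.ne'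
  have := invertibleOfNonzero hne
  rw [FDRep.simple_iff_char_is_norm_one]
  have h := Representation.char_orthonormal ρ ρ
  rw [if_pos ⟨Representation.Equiv.refl ρ⟩, inv_mul_eq_one₀ hne] at h
  exact h.symm

/-- Central elements with the same irreducible character values act equally on an
irreducible representation. -/
lemma aux_irreducible {G : Type} [Group G] [Fintype G] {V : Type} [AddCommGroup V]
    [Module ℂ V] [FiniteDimensional ℂ V] (ρ : Representation ℂ G V)
    [Representation.IsIrreducible ρ] (z w : G) (hz : z ∈ Submonoid.center G)
    (hw : w ∈ Submonoid.center G)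
    (h : ∀ V : FDRep ℂ G, CategoryTheory.Simple V → V.character z = V.character w) :
    ρ z = ρ w := by
  have key : ∀ x ∈ Submonoid.center G, ∃ c : ℂ, ρ x = c • 1 := by
    intro x hx
    obtain ⟨c, hc⟩ := (Representation.IsIrreducible.algebraMap_intertwiningMap_bijective_of_isAlgClosed
      (ρ := ρ)).2 (Representation.IntertwiningMap.centralMul ρ x hx)
    exact ⟨c, congrArg (fun f => f.toLinearMap) hc.symm⟩
  obtain ⟨c, hc⟩ := key z hz
  obtain ⟨d, hd⟩ := key w hw
  have h1 : LinearMap.trace ℂ V (ρ z) = LinearMap.trace ℂ V (ρ w) :=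
    h (FDRep.of ρ) (aux_simple_of_irreducible ρ)
  have : Nontrivial V := by
    have := IsSimpleModule.nontrivial (MonoidAlgebra ℂ G) ρ.asModule
    exact this
  have hn : (Module.finrank ℂ V : ℂ) ≠ 0 := Nat.cast_ne_zero.mpr Module.finrank_pos.ne'
  rw [hc, hd, map_smul, map_smul, LinearMap.trace_one, smul_eq_mul, smul_eq_mul] at h1
  rw [hc, hd, mul_right_cancel₀ hn h1]

lemma aux_module {G : Type} [Group G] [Fintype G] (M : Type) [AddCommGroup M]
    [Module (MonoidAlgebra ℂ G) M] [IsSimpleModule (MonoidAlgebra ℂ G) M]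
    (z w : G) (hz : z ∈ Submonoid.center G)
    (hw : w ∈ Submonoid.center G)
    (h : ∀ V : FDRep ℂ G, CategoryTheory.Simple V → V.character z = V.character w) (m : M) :
    MonoidAlgebra.single z (1 : ℂ) • m = MonoidAlgebra.single w (1 : ℂ) • m := by
  let := RestrictScalars.moduleOrig ℂ (MonoidAlgebra ℂ G) M
  have : Module.Finite (MonoidAlgebra ℂ G) (RestrictScalars ℂ (MonoidAlgebra ℂ G) M) :=
    inferInstanceAs (Module.Finite (MonoidAlgebra ℂ G) M)
  have : Module.Finite ℂ (MonoidAlgebra ℂ G) := inferInstance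
  have : Module.Finite ℂ (RestrictScalars ℂ (MonoidAlgebra ℂ G) M) :=
    Module.Finite.trans (MonoidAlgebra ℂ G) _
  have := (Representation.isSimpleModule_iff_irreducible_ofModule (k := ℂ) (G := G) M).1
    inferInstance
  have := @aux_irreducible G _ _ (RestrictScalars ℂ (MonoidAlgebra ℂ G) M) _
    (RestrictScalars.module ℂ (MonoidAlgebra ℂ G) M) ‹_›
    (Representation.ofModule (k := ℂ) (G := G) M) ‹_› z w hz hw h
  exact congrArg (fun f => f.toFun m) this

lemma aux_eq {G : Type} [Group G] [Fintype G]
    (z w : G) (hz : z ∈ Submonoid.center G) (hw : w ∈ Submonoid.center G)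
    (h : ∀ V : FDRep ℂ G, CategoryTheory.Simple V → V.character z = V.character w) :
    z = w := by
  have : NeZero (Nat.card G : ℂ) := ⟨Nat.cast_ne_zero.mpr Nat.card_pos.ne'⟩
  have htop := IsSemisimpleModule.sSup_simples_eq_top (MonoidAlgebra ℂ G) (MonoidAlgebra ℂ G)
  rw [sSup_eq_iSup'] at htop
  have hall : ∀ m : MonoidAlgebra ℂ G,
      MonoidAlgebra.single z (1 : ℂ) • m = MonoidAlgebra.single w (1 : ℂ) • m := by
    intro m
    have hm : m ∈ (⊤ : Submodule (MonoidAlgebra ℂ G) (MonoidAlgebra ℂ G)) := trivial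
    rw [← htop] at hm
    induction hm using Submodule.iSup_induction' with
    | mem S x hx =>
      have : IsSimpleModule (MonoidAlgebra ℂ G) S.1 := S.2
      exact congrArg Subtype.val (aux_module S.1 z w hz hw h ⟨x, hx⟩)
    | zero => simp
    | add x y _ _ hx hy => rw [smul_add, smul_add, hx, hy]
  have h1 := hall 1
  rw [smul_eq_mul, smul_eq_mul, mul_one, mul_one] at h1
  exact MonoidAlgebra.of_injective (R := ℂ) h1

theorem center_eq_of_invariant_characters (B : Type) [Group B] [Fintype B]
    (A : Subgroup B) [A.Normal]
    (hZ : Subgroup.center B ≤ A) (hcyc : IsCyclic (B ⧸ A))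
    (hinv : ∀ V : FDRep ℂ A, CategoryTheory.Simple V → ∀ (b : B) (a : A)
      (h : b⁻¹ * (a : B) * b ∈ A), V.character ⟨b⁻¹ * (a : B) * b, h⟩ = V.character a) :
    Subgroup.centralizer (A : Set B) ⊓ A = Subgroup.center B ∧
    (A ≠ ⊤ → ¬ ∀ x ∈ A, ∀ y ∈ A, x * y = y * x) := by
  have main : Subgroup.centralizer (A : Set B) ⊓ A = Subgroup.center B := by
    apply le_antisymm
    · rintro z ⟨hzc, hzA⟩
      rw [Subgroup.mem_center_iff]
      intro b
      have hmem : b⁻¹ * z * b ∈ A := by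
        simpa using (inferInstance : A.Normal).conj_mem z hzA b⁻¹
      have hzc' : ∀ g ∈ A, g * z = z * g := fun g hg => Subgroup.mem_centralizer_iff.1 hzc g hg
      have : Fintype A := Fintype.ofFinite A
      have := aux_eq (G := A) ⟨b⁻¹ * z * b, hmem⟩ ⟨z, hzA⟩ ?_ ?_
        (fun V hV => hinv V hV b ⟨z, hzA⟩ hmem)
      · have h2 : b⁻¹ * z * b = z := congrArg Subtype.val this
        calc b * z = b * (b⁻¹ * z * b) := by rw [h2]
          _ = z * b := by group
      · rw [Submonoid.mem_center_iff]
        rintro ⟨g, hg⟩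
        apply Subtype.ext
        change g * (b⁻¹ * z * b) = b⁻¹ * z * b * g
        have h3 := hzc' (b * g * b⁻¹) ((inferInstance : A.Normal).conj_mem g hg b)
        calc g * (b⁻¹ * z * b) = b⁻¹ * ((b * g * b⁻¹) * z) * b := by group
          _ = b⁻¹ * (z * (b * g * b⁻¹)) * b := by rw [h3]
          _ = b⁻¹ * z * b * g := by group
      · rw [Submonoid.mem_center_iff]
        rintro ⟨g, hg⟩
        exact Subtype.ext (hzc' g hg)
    · intro z hz
      exact ⟨Subgroup.center_le_centralizer _ hz, hZ hz⟩
  refine ⟨main, fun hne hab => hne ?_⟩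
  have hA : A ≤ Subgroup.center B := by
    rw [← main]
    exact le_inf (fun x hx => Subgroup.mem_centralizer_iff.2 fun y hy => hab y hy x hx) le_rfl
  rw [eq_top_iff]
  intro x _
  apply hZ
  rw [Subgroup.mem_center_iff]
  intro y
  exact commutative_of_cyclic_center_quotient (QuotientGroup.mk' A)
    (by rw [QuotientGroup.ker_mk']; exact hA) y x
end
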